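/- Let a ∈ L¹(ℝ₊)^{p×p}, b ∈ L¹(ℝ₊)^{p×q}, c ∈ L¹(ℝ₋)^{q×p}, d ∈ L¹(ℝ₋)^{q×q}, set α = e_p + a, β = b, γ = c, δ = e_q + d, and assume a* + a + a*⋆a − c*⋆c = 0, d* + d + d*⋆d − b*⋆b = 0 and b + a*⋆b = c* + c*⋆d. Then for every τ ≥ 0 the operators M₁₁, M₁₂, M₂₁, M₂₂ satisfy the intertwining relations M₁₁ V_{p,τ}* M₁₂ = M₁₂ J_q V_{q,τ} J_q M₂₂ and M₂₂ J_q V_{q,τ}* J_q M₂₁ = M₂₁ V_{p,τ} M₁₁; moreover, if M₁₁ and M₂₂ are invertible then V_{p,τ}* M₁₂ M₂₂⁻¹ = M₁₁⁻¹ M₁₂ J_q V_{q,τ} J_q and J_q V_{q,τ}* J_q M₂₁ M₁₁⁻¹ = M₂₂⁻¹ M₂₁ V_{p,τ}. -/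

import Mathlib

/-!
All operators are transported to the whole line. The space `L¹(ℝ)` is a commutative algebra under
convolution; adjoining a unit gives the algebra `Wien = ℂe + L¹(ℝ)`, and square matrices over it act
on `L¹(ℝ)^(p+q)`, commuting with translations. Let `U` be the action of the block matrix
`[α β; γ δ]`, let `U*` be that of its adjoint, and put `J = diag(1, -1)`. The hypotheses say
`U* J U = J` (`block_left`); since the matrix entries commute, a left inverse is a right inverse,
so also `U J U* = J` (`block_right`).

Let `E₁`, `E₂` be the coordinate projections onto the two blocks, `P`, `Q` the restrictions to
`ℝ₊`, `ℝ₋`, and `u = E₁U`, `u' = U*E₁`, `w = E₂U`, `w' = U*E₂`. Then `u'u - w'w = J`, `uJw' = 0`,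
`wJu' = 0`, and on extensions by zero
`M₁₁ = PuJPu'`, `M₁₂ = -PuJQw'`, `M₂₁ = QwJPu'`, `M₂₂ = -QwJQw'`.
With `R` the translation `f ↦ f(· + τ)` and `S` its inverse, `V_p*` is `PR`, `J_q V_q J_q` is `QR`,
`V_p` is `PS` and `J_q V_q* J_q` is `QS`. The supports of `a, b, c, d` say that `u'` and `w` map
`Q`-vectors to `Q`-vectors, and `w'` and `u` map `P`-vectors to `P`-vectors. From these facts the
first relation is a computation in a noncommutative ring (`core_intertwine`), and the second one is
its mirror image under `P ↔ Q`, `u ↔ w`, `J ↦ -J`, `R ↦ S` (`core_apply'`). The relations for the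
inverses follow by multiplying with `M₁₁⁻¹` and `M₂₂⁻¹`.
-/

open MeasureTheory Set Matrix
open scoped ComplexConjugate

noncomputable section

abbrev MatF (r s : ℕ) := ℝ → Matrix (Fin r) (Fin s) ℂ

def conv {r s u : ℕ} (f : MatF r s) (h : MatF s u) : MatF r u :=
  fun t => Matrix.of fun i j => ∫ τ : ℝ, (f (t - τ) * h τ) i j

def adjF {r s : ℕ} (f : MatF r s) : MatF s r := fun t => (f (-t))ᴴ

def L1Plus {r s : ℕ} (f : MatF r s) : Prop :=
  (∀ i j, Integrable fun t => f t i j) ∧ ∀ t < (0:ℝ), f t = 0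

def L1Minus {r s : ℕ} (f : MatF r s) : Prop :=
  (∀ i j, Integrable fun t => f t i j) ∧ ∀ t > (0:ℝ), f t = 0

def μP : Measure ℝ := volume.restrict (Ici 0)
def μM : Measure ℝ := volume.restrict (Iic 0)

abbrev L1P (n : ℕ) := Lp (Fin n → ℂ) 1 μP
abbrev L1M (n : ℕ) := Lp (Fin n → ℂ) 1 μM

def IsHP {k m : ℕ} (r : MatF k m) (H : L1M m →L[ℂ] L1P k) : Prop :=
  ∀ f : L1M m, ⇑(H f) =ᵐ[μP] fun t => ∫ s, (r (t - s)).mulVec (f s) ∂μM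

def IsHM {k m : ℕ} (r : MatF k m) (H : L1P m →L[ℂ] L1M k) : Prop :=
  ∀ f : L1P m, ⇑(H f) =ᵐ[μM] fun t => ∫ s, (r (t - s)).mulVec (f s) ∂μP

def IsTP {k m : ℕ} (r₀ : Matrix (Fin k) (Fin m) ℂ) (r : MatF k m)
    (T : L1P m →L[ℂ] L1P k) : Prop :=
  ∀ f : L1P m, ⇑(T f) =ᵐ[μP] fun t => r₀.mulVec (f t) + ∫ s, (r (t - s)).mulVec (f s) ∂μP

def IsTM {k m : ℕ} (r₀ : Matrix (Fin k) (Fin m) ℂ) (r : MatF k m)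
    (T : L1M m →L[ℂ] L1M k) : Prop :=
  ∀ f : L1M m, ⇑(T f) =ᵐ[μM] fun t => r₀.mulVec (f t) + ∫ s, (r (t - s)).mulVec (f s) ∂μM

def blockCLM {X Y Z W : Type*} [NormedAddCommGroup X] [NormedSpace ℂ X]
    [NormedAddCommGroup Y] [NormedSpace ℂ Y] [NormedAddCommGroup Z] [NormedSpace ℂ Z]
    [NormedAddCommGroup W] [NormedSpace ℂ W]
    (A : X →L[ℂ] Z) (B : Y →L[ℂ] Z) (C : X →L[ℂ] W) (D : Y →L[ℂ] W) :
    (X × Y) →L[ℂ] (Z × W) :=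
  (A.comp (ContinuousLinearMap.fst ℂ X Y) + B.comp (ContinuousLinearMap.snd ℂ X Y)).prod
    (C.comp (ContinuousLinearMap.fst ℂ X Y) + D.comp (ContinuousLinearMap.snd ℂ X Y))

def InvertibleCLM {X Y : Type*} [NormedAddCommGroup X] [NormedSpace ℂ X]
    [NormedAddCommGroup Y] [NormedSpace ℂ Y] (T : X →L[ℂ] Y) : Prop :=
  ∃ S : Y →L[ℂ] X, S.comp T = ContinuousLinearMap.id ℂ X ∧ T.comp S = ContinuousLinearMap.id ℂ Y

def AeZeroPos {r s : ℕ} (f : MatF r s) : Prop := ∀ᵐ t : ℝ, 0 < t → f t = 0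
def AeZeroNeg {r s : ℕ} (f : MatF r s) : Prop := ∀ᵐ t : ℝ, t < 0 → f t = 0

def EGSol {p q : ℕ} (a : MatF p p) (b : MatF p q) (c : MatF q p) (d : MatF q q)
    (g : MatF p q) : Prop :=
  AeZeroPos (fun t => a t + conv g c t) ∧
  AeZeroNeg (fun t => adjF g t + conv (adjF g) a t + c t) ∧
  AeZeroNeg (fun t => d t + conv (adjF g) b t) ∧
  AeZeroPos (fun t => g t + conv g d t + b t)


def colF {r s : ℕ} (f : MatF r s) (j : Fin s) : ℝ → Fin r → ℂ := fun t i => f t i j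

/-- Condition (L1): `α*⋄α − γ*⋄γ = e_p`, `δ*⋄δ − β*⋄β = e_q`, `α*⋄β = γ*⋄δ`,
written out in terms of the data `a,b,c,d`. -/
def CondL1 {p q : ℕ} (a : MatF p p) (b : MatF p q) (c : MatF q p) (d : MatF q q) : Prop :=
  (∀ᵐ t ∂(volume : Measure ℝ), adjF a t + a t + conv (adjF a) a t - conv (adjF c) c t = 0) ∧
  (∀ᵐ t ∂(volume : Measure ℝ), adjF d t + d t + conv (adjF d) d t - conv (adjF b) b t = 0) ∧
  (∀ᵐ t ∂(volume : Measure ℝ), b t + conv (adjF a) b t = adjF c t + conv (adjF c) d t)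

/-- The transposed identities (conditions (C4)--(C6) in the `L¹` setting). -/
def CondL1T {p q : ℕ} (a : MatF p p) (b : MatF p q) (c : MatF q p) (d : MatF q q) : Prop :=
  (∀ᵐ t ∂(volume : Measure ℝ), a t + adjF a t + conv a (adjF a) t - conv b (adjF b) t = 0) ∧
  (∀ᵐ t ∂(volume : Measure ℝ), d t + adjF d t + conv d (adjF d) t - conv c (adjF c) t = 0) ∧
  (∀ᵐ t ∂(volume : Measure ℝ), adjF c t + conv a (adjF c) t = b t + conv b (adjF d) t)

/-- `V` is the translation operator `V_{n,τ}` on `L¹(ℝ₊)ⁿ`. -/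
def IsShiftP {n : ℕ} (τ : ℝ) (V : L1P n →L[ℂ] L1P n) : Prop :=
  ∀ f : L1P n, ⇑(V f) =ᵐ[μP] fun t => if τ ≤ t then f (t - τ) else 0

/-- `V` is the adjoint translation operator `V_{n,τ}*` on `L¹(ℝ₊)ⁿ`. -/
def IsShiftStarP {n : ℕ} (τ : ℝ) (V : L1P n →L[ℂ] L1P n) : Prop :=
  ∀ f : L1P n, ⇑(V f) =ᵐ[μP] fun t => f (t + τ)

/-- `J` is the flip operator from `L¹(ℝ₊)ⁿ` to `L¹(ℝ₋)ⁿ`. -/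
def IsFlipPM {n : ℕ} (J : L1P n →L[ℂ] L1M n) : Prop :=
  ∀ f : L1P n, ⇑(J f) =ᵐ[μM] fun t => f (-t)

/-- `J` is the flip operator from `L¹(ℝ₋)ⁿ` to `L¹(ℝ₊)ⁿ`. -/
def IsFlipMP {n : ℕ} (J : L1M n →L[ℂ] L1P n) : Prop :=
  ∀ f : L1M n, ⇑(J f) =ᵐ[μP] fun t => f (-t)

/-! ### The convolution algebra `L¹(ℝ)` -/

open ContinuousLinearMap (mul)
open scoped Convolution

/-- The scalar space `L¹(ℝ)`. -/
abbrev L1R : Type := Lp ℂ 1 (volume : Measure ℝ)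

/-- Scalar convolution of functions on the line. -/
abbrev scv (f g : ℝ → ℂ) : ℝ → ℂ := f ⋆[mul ℂ ℂ, volume] g

theorem l1_integrable (f : L1R) : Integrable f (volume : Measure ℝ) := L1.integrable_coeFn f

theorem scv_integrable {f g : ℝ → ℂ} (hf : Integrable f) (hg : Integrable g) :
    Integrable (scv f g) := hf.integrable_convolution _ hg

theorem scv_comm (f g : ℝ → ℂ) : scv f g = scv g f := by
  rw [scv, ← convolution_flip]
  congr 1
  ext; simp

instance : Mul L1R := ⟨fun f g => (scv_integrable (l1_integrable f) (l1_integrable g)).toL1 _⟩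

theorem l1_mul_def (f g : L1R) :
    f * g = (scv_integrable (l1_integrable f) (l1_integrable g)).toL1 _ := rfl

theorem l1_coe_mul (f g : L1R) : ⇑(f * g) =ᵐ[volume] scv f g := Integrable.coeFn_toL1 _

theorem scv_congr {f f' g g' : ℝ → ℂ} (hf : f =ᵐ[volume] f') (hg : g =ᵐ[volume] g') :
    scv f g = scv f' g' := convolution_congr _ hf hg

theorem toL1_mul_toL1 {f g : ℝ → ℂ} (hf : Integrable f volume) (hg : Integrable g volume) :
    hf.toL1 f * hg.toL1 g = (scv_integrable hf hg).toL1 (scv f g) := by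
  rw [l1_mul_def]
  congr 1
  exact scv_congr hf.coeFn_toL1 hg.coeFn_toL1

theorem scv_assoc {f g h : ℝ → ℂ} (hf : Integrable f) (hg : Integrable g) (hh : Integrable h) :
    scv (scv f g) h =ᵐ[volume] scv f (scv g h) := by
  have h1 := (hf.norm).ae_convolution_exists (mul ℝ ℝ)
    (hg.norm.integrable_convolution (mul ℝ ℝ) hh.norm)
  filter_upwards [h1] with x hx
  exact convolution_assoc _ _ _ _ (fun x y z => by simp [mul_assoc]) hf.1 hg.1 hh.1
    (hf.ae_convolution_exists _ hg) (hg.norm.ae_convolution_exists _ hh.norm) hx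

theorem scv_add {f g h : ℝ → ℂ} (hf : Integrable f) (hg : Integrable g) (hh : Integrable h) :
    scv f (g + h) =ᵐ[volume] scv f g + scv f h := by
  filter_upwards [hf.ae_convolution_exists (mul ℂ ℂ) hg, hf.ae_convolution_exists (mul ℂ ℂ) hh]
    with x h1 h2
  exact h1.distrib_add h2

/-- `L¹(ℝ)` is a commutative algebra under convolution. -/
instance : NonUnitalCommRing L1R :=
  have hadd : ∀ f g h : L1R, f * (g + h) = f * g + f * h := by
    intro f g h
    apply Lp.ext
    refine (l1_coe_mul _ _).trans ?_
    rw [scv_congr (Filter.EventuallyEq.refl _ _) (Lp.coeFn_add g h)]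
    refine (scv_add (l1_integrable f) (l1_integrable g) (l1_integrable h)).trans ?_
    exact ((l1_coe_mul f g).symm.add (l1_coe_mul f h).symm).trans (Lp.coeFn_add _ _).symm
  have hcomm : ∀ f g : L1R, f * g = g * f := by
    intro f g
    simp only [l1_mul_def, scv_comm f g]
  have hzero : ∀ f : L1R, f * 0 = 0 := fun f => by
    have := hadd f 0 0
    simpa using this
  { (inferInstance : AddCommGroup L1R), (inferInstance : Mul L1R) with
    left_distrib := hadd
    right_distrib := fun f g h => by rw [hcomm, hadd, hcomm h f, hcomm h g]
    zero_mul := fun f => by rw [hcomm, hzero]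
    mul_zero := hzero
    mul_assoc := fun f g h => by
      apply Lp.ext
      refine (l1_coe_mul _ _).trans ?_
      rw [scv_congr (l1_coe_mul f g) (Filter.EventuallyEq.refl _ _)]
      refine (scv_assoc (l1_integrable f) (l1_integrable g) (l1_integrable h)).trans ?_
      rw [← scv_congr (Filter.EventuallyEq.refl _ _) (l1_coe_mul g h)]
      exact (l1_coe_mul _ _).symm
    mul_comm := hcomm }

theorem l1_mul_smul' (z : ℂ) (f g : L1R) : f * (z • g) = z • (f * g) := by
  apply Lp.ext
  refine (l1_coe_mul _ _).trans ?_
  rw [scv_congr (Filter.EventuallyEq.refl _ _) (Lp.coeFn_smul z g), scv, convolution_smul]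
  exact ((l1_coe_mul f g).symm.const_smul z).trans (Lp.coeFn_smul _ _).symm

instance : SMulCommClass ℂ L1R L1R := ⟨fun z f g => by
  simp only [smul_eq_mul, l1_mul_smul']⟩

instance : IsScalarTower ℂ L1R L1R := ⟨fun z f g => by
  simp only [smul_eq_mul]
  rw [mul_comm, l1_mul_smul', mul_comm]⟩

/-- The unital commutative algebra `ℂe + L¹(ℝ)`. -/
abbrev Wien := Unitization ℂ L1R

/-- Elements of `ℂe + L¹(ℝ)` acting on `L¹(ℝ)` by convolution. -/
def wienAct : Wien →ₐ[ℂ] Module.End ℂ L1R := Unitization.lift (NonUnitalAlgHom.lmul ℂ L1R)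

theorem wienAct_inr (f g : L1R) : wienAct (Unitization.inr f) g = f * g := by
  simp [wienAct]

/-! ### Half-line projections, translations and matrix functions -/

theorem scv_def (f g : ℝ → ℂ) (t : ℝ) : scv f g t = ∫ s, f s * g (t - s) := rfl

theorem scv_swap (f g : ℝ → ℂ) (t : ℝ) : scv f g t = ∫ s, f (t - s) * g s :=
  convolution_eq_swap _

/-- Multiplication by the indicator function of `s`, on `L¹(ℝ)`. -/
def prj {s : Set ℝ} (hs : MeasurableSet s) : Module.End ℂ L1R where
  toFun f := ((l1_integrable f).indicator hs).toL1 _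
  map_add' f g := by
    apply Lp.ext
    filter_upwards [((l1_integrable (f + g)).indicator hs).coeFn_toL1, Lp.coeFn_add f g,
      Lp.coeFn_add (((l1_integrable f).indicator hs).toL1 _) (((l1_integrable g).indicator hs).toL1 _),
      ((l1_integrable f).indicator hs).coeFn_toL1, ((l1_integrable g).indicator hs).coeFn_toL1]
      with t h1 h2 h3 h4 h5
    rw [h1, h3, Pi.add_apply, h4, h5]
    by_cases ht : t ∈ s <;> simp only [ht, h2, indicator_of_mem, indicator_of_notMem,
      not_false_eq_true, Pi.add_apply, add_zero]
  map_smul' z f := by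
    apply Lp.ext
    filter_upwards [((l1_integrable (z • f)).indicator hs).coeFn_toL1, Lp.coeFn_smul z f,
      Lp.coeFn_smul z (((l1_integrable f).indicator hs).toL1 _),
      ((l1_integrable f).indicator hs).coeFn_toL1]
      with t h1 h2 h3 h4
    rw [h1, RingHom.id_apply, h3, Pi.smul_apply, h4]
    by_cases ht : t ∈ s <;> simp only [ht, h2, indicator_of_mem, indicator_of_notMem,
      not_false_eq_true, Pi.smul_apply, smul_zero]

theorem prj_coe {s : Set ℝ} (hs : MeasurableSet s) (f : L1R) :
    ⇑(prj hs f) =ᵐ[volume] s.indicator f :=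
  ((l1_integrable f).indicator hs).coeFn_toL1

theorem prj_congr {s : Set ℝ} (hs : MeasurableSet s) {f g : L1R}
    (h : ∀ᵐ t, t ∈ s → f t = g t) : prj hs f = prj hs g := by
  apply Lp.ext
  filter_upwards [prj_coe hs f, prj_coe hs g, h] with t h1 h2 h3
  rw [h1, h2]
  by_cases ht : t ∈ s <;> simp [ht, h3]

theorem prj_eq_zero {s : Set ℝ} (hs : MeasurableSet s) {f : L1R}
    (h : ∀ᵐ t, t ∈ s → f t = 0) : prj hs f = 0 := by
  rw [← map_zero (prj hs)]
  apply prj_congr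
  filter_upwards [h, Lp.coeFn_zero ℂ 1 (volume : Measure ℝ)] with t h1 h2 ht
  rw [h1 ht, h2]; rfl

theorem meas_Ici : MeasurableSet (Ici (0 : ℝ)) := measurableSet_Ici

theorem meas_Iic : MeasurableSet (Iic (0 : ℝ)) := measurableSet_Iic

/-- The projection of `L¹(ℝ)` onto `L¹(ℝ₊)`. -/
abbrev pP : Module.End ℂ L1R := prj meas_Ici
/-- The projection of `L¹(ℝ)` onto `L¹(ℝ₋)`. -/
abbrev pM : Module.End ℂ L1R := prj meas_Iic

theorem ae_ne_zero : ∀ᵐ t : ℝ, t ≠ 0 := by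
  simp [ae_iff]

theorem pP_add_pM : pP + pM = 1 := by
  ext1 f
  apply Lp.ext
  filter_upwards [Lp.coeFn_add (pP f) (pM f), prj_coe meas_Ici f,
    prj_coe meas_Iic f, ae_ne_zero] with t h1 h2 h3 h4
  rw [LinearMap.add_apply, h1, Pi.add_apply, h2, h3]
  rcases lt_or_gt_of_ne h4 with h | h
  · simp [h.le, h]
  · simp [h.le, h]

theorem pP_pM : pP * pM = 0 := by
  ext1 f
  refine prj_eq_zero meas_Ici ?_
  filter_upwards [prj_coe meas_Iic f, ae_ne_zero] with t h1 h2 ht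
  rw [h1, indicator_of_notMem]
  exact fun h => h2 (le_antisymm h ht)

theorem pM_pP : pM * pP = 0 := by
  ext1 f
  refine prj_eq_zero meas_Iic ?_
  filter_upwards [prj_coe meas_Ici f, ae_ne_zero] with t h1 h2 ht
  rw [h1, indicator_of_notMem]
  exact fun h => h2 (le_antisymm ht h)

/-- Translation `f ↦ f(· + τ)` on `L¹(ℝ)`. -/
def trn (τ : ℝ) : Module.End ℂ L1R :=
  Lp.compMeasurePreservingₗ ℂ (fun t => t + τ) (measurePreserving_add_right volume τ)

theorem trn_coe (τ : ℝ) (f : L1R) : ⇑(trn τ f) =ᵐ[volume] fun t => f (t + τ) :=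
  Lp.coeFn_compMeasurePreserving f (measurePreserving_add_right volume τ)

theorem trn_mul (τ : ℝ) (f g : L1R) : trn τ (f * g) = f * trn τ g := by
  apply Lp.ext
  have h1 := (measurePreserving_add_right volume τ).quasiMeasurePreserving.ae (l1_coe_mul f g)
  filter_upwards [trn_coe τ (f * g), l1_coe_mul f (trn τ g), h1] with t h1 h2 h3
  rw [h1, h3, h2, scv_congr (Filter.EventuallyEq.refl _ _) (trn_coe τ g)]
  simp only [scv_def]
  congr 1; ext s; congr 2; ring

theorem pP_trn_pM {τ : ℝ} (hτ : 0 ≤ τ) : pP * trn τ * pM = 0 := by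
  ext1 f
  refine prj_eq_zero meas_Ici ?_
  have h1 := (measurePreserving_add_right volume τ).quasiMeasurePreserving.ae
    (prj_coe meas_Iic f)
  filter_upwards [trn_coe τ (pM f), h1, ae_ne_zero] with t h1 h2 h3 ht
  rw [h1, h2, indicator_of_notMem]
  intro h
  simp only [mem_Iic, mem_Ici] at h ht
  exact h3 (by linarith)

theorem pM_trn_pP {τ : ℝ} (hτ : 0 ≤ τ) : pM * trn (-τ) * pP = 0 := by
  ext1 f
  refine prj_eq_zero meas_Iic ?_
  have h1 := (measurePreserving_add_right volume (-τ)).quasiMeasurePreserving.ae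
    (prj_coe meas_Ici f)
  filter_upwards [trn_coe (-τ) (pP f), h1, ae_ne_zero] with t h1 h2 h3 ht
  rw [h1, h2, indicator_of_notMem]
  intro h
  simp only [mem_Iic, mem_Ici] at h ht
  exact h3 (by linarith)

/-- Convolution by a function supported on `ℝ₊` preserves functions supported on `ℝ₊`. -/
theorem pM_mul_pP {f : ℝ → ℂ} (hf : Integrable f volume) (h0 : ∀ t < 0, f t = 0) (g : L1R) :
    pM (hf.toL1 f * pP g) = 0 := by
  refine prj_eq_zero _ ?_
  filter_upwards [l1_coe_mul (hf.toL1 f) (pP g), ae_ne_zero] with t h1 h2 ht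
  rw [h1, scv_congr hf.coeFn_toL1 (prj_coe _ g), scv_def]
  apply integral_eq_zero_of_ae
  refine Filter.Eventually.of_forall fun s => ?_
  have ht' : t < 0 := lt_of_le_of_ne ht h2
  rcases lt_or_ge s 0 with hs | hs
  · simp [h0 s hs]
  · dsimp only
    rw [indicator_of_notMem]
    · simp
    · simp only [mem_Ici, not_le]; linarith

/-- Convolution by a function supported on `ℝ₋` preserves functions supported on `ℝ₋`. -/
theorem pP_mul_pM {f : ℝ → ℂ} (hf : Integrable f volume) (h0 : ∀ t > 0, f t = 0) (g : L1R) :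
    pP (hf.toL1 f * pM g) = 0 := by
  refine prj_eq_zero _ ?_
  filter_upwards [l1_coe_mul (hf.toL1 f) (pM g), ae_ne_zero] with t h1 h2 ht
  rw [h1, scv_congr hf.coeFn_toL1 (prj_coe _ g), scv_def]
  apply integral_eq_zero_of_ae
  refine Filter.Eventually.of_forall fun s => ?_
  have ht' : 0 < t := lt_of_le_of_ne ht (Ne.symm h2)
  rcases lt_or_ge 0 s with hs | hs
  · simp [h0 s hs]
  · dsimp only
    rw [indicator_of_notMem]
    · simp
    · simp only [mem_Iic, not_le]; linarith

/-- The matrix of `L¹(ℝ)`-classes of the entries of a matrix function. -/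
def cls {k m : ℕ} (r : MatF k m) (hr : ∀ i j, Integrable (fun t => r t i j) volume) :
    Matrix (Fin k) (Fin m) L1R := of fun i j => (hr i j).toL1 _

theorem cls_coe {k m : ℕ} {r : MatF k m} (hr : ∀ i j, Integrable (fun t => r t i j) volume)
    (i : Fin k) (j : Fin m) : ⇑(cls r hr i j) =ᵐ[volume] fun t => r t i j :=
  (hr i j).coeFn_toL1

theorem l1_coe_sum {ι : Type*} (s : Finset ι) (f : ι → L1R) :
    ⇑(∑ i ∈ s, f i) =ᵐ[volume] fun t => ∑ i ∈ s, f i t := by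
  classical
  induction s using Finset.induction_on with
  | empty => rw [Finset.sum_empty]; exact Lp.coeFn_zero ℂ 1 (volume : Measure ℝ)
  | insert a s ha ih =>
    rw [Finset.sum_insert ha]
    filter_upwards [Lp.coeFn_add (f a) (∑ i ∈ s, f i), ih] with t h1 h2
    rw [h1, Pi.add_apply, h2, Finset.sum_insert ha]

theorem ae_integrable_swap {f g : ℝ → ℂ} (hf : Integrable f) (hg : Integrable g) :
    ∀ᵐ t : ℝ, Integrable fun s => f (t - s) * g s := by
  filter_upwards [hf.ae_convolution_exists (mul ℂ ℂ) hg] with t ht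
  exact ht.integrable_swap

theorem cls_mul_coe {k m n : ℕ} {r : MatF k m} {r' : MatF m n}
    (hr : ∀ i j, Integrable (fun t => r t i j) volume)
    (hr' : ∀ i j, Integrable (fun t => r' t i j) volume) (i : Fin k) (j : Fin n) :
    ⇑((cls r hr * cls r' hr') i j) =ᵐ[volume] fun t => conv r r' t i j := by
  rw [Matrix.mul_apply]
  have h1 : ∀ l, ∀ᵐ t, (cls r hr i l * cls r' hr' l j : L1R) t = ∫ s, r (t - s) i l * r' s l j := by
    intro l
    filter_upwards [l1_coe_mul (cls r hr i l) (cls r' hr' l j)] with t ht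
    rw [ht, scv_congr (cls_coe hr i l) (cls_coe hr' l j), scv_swap]
  filter_upwards [l1_coe_sum Finset.univ fun l => cls r hr i l * cls r' hr' l j,
    ae_all_iff.2 h1, ae_all_iff.2 fun l => ae_integrable_swap (hr i l) (hr' l j)] with t h2 h3 h4
  rw [h2]
  simp only [h3, conv, Matrix.of_apply, Matrix.mul_apply]
  rw [integral_finsetSum _ fun l _ => h4 l]

theorem adjF_adjF {k m : ℕ} (r : MatF k m) : adjF (adjF r) = r := by
  ext; simp [adjF]

theorem adjF_conv {k m n : ℕ} (r : MatF k m) (r' : MatF m n) :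
    adjF (conv r r') = conv (adjF r') (adjF r) := by
  ext t i j
  simp only [adjF, conv, Matrix.conjTranspose_apply, Matrix.of_apply, Matrix.mul_apply]
  simp only [← starRingEnd_apply]
  rw [← integral_conj, ← integral_sub_right_eq_self
    (fun s => conj (∑ l, r (-t - s) j l * r' s l i)) t]
  congr 1; ext s
  simp only [map_sum, map_mul]
  refine Finset.sum_congr rfl fun l _ => ?_
  rw [mul_comm]
  congr 3 <;> ring

theorem adjF_integrable {k m : ℕ} {r : MatF k m} (hr : ∀ i j, Integrable (fun t => r t i j) volume)
    (i : Fin m) (j : Fin k) : Integrable (fun t => adjF r t i j) volume := by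
  have := (hr j i).comp_neg
  exact (Complex.conjCLE.toContinuousLinearMap.integrable_comp this)

theorem L1Plus.adjF {k m : ℕ} {r : MatF k m} (hr : L1Plus r) : L1Minus (adjF r) :=
  ⟨adjF_integrable hr.1, fun t ht => by simp [_root_.adjF, hr.2 (-t) (by linarith)]⟩

theorem L1Minus.adjF {k m : ℕ} {r : MatF k m} (hr : L1Minus r) : L1Plus (adjF r) :=
  ⟨adjF_integrable hr.1, fun t ht => by simp [_root_.adjF, hr.2 (-t) (by linarith)]⟩

/-! ### The abstract intertwining relation -/

/-- The intertwining relation in an abstract ring. `P`, `Q` are complementary projections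
(functions supported on the two half lines), `R` is a translation towards the left, and `u`, `w`
(`u'`, `w'`) stand for the two block rows (columns) of a `J`-unitary symbol (of its adjoint).
The factors `P * u * J * P * u'`, `-(P * u * J * Q * w')`, `-(Q * w * J * Q * w')` play the roles
of `M₁₁`, `M₁₂`, `M₂₂`. Since `u' * u = J + w' * w`, the left side becomes an expression in `w' * w`; its
`P` can be exchanged for `-Q` because `u * J * w' = 0`. -/
theorem core_intertwine {𝓡 : Type*} [Ring 𝓡] {P Q R u u' w w' J : 𝓡}
    (hPQ : P + Q = 1)
    (hJJ : J * J = 1) (hJQ : J * Q = Q * J) (hJR : J * R = R * J)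
    (huR : u * R = R * u) (hu'R : u' * R = R * u') (hw'R : w' * R = R * w')
    (hPu' : P * u' * Q = 0) (hPw : P * w * Q = 0) (hPR : P * R * Q = 0)
    (hL : u' * u - w' * w = J) (hT : u * J * w' = 0) :
    (P * u * J * P * u') * (P * R) * (-(P * u * J * Q * w')) =
      (-(P * u * J * Q * w')) * (Q * R) * (-(Q * w * J * Q * w')) := by
  obtain rfl : Q = 1 - P := by rw [← hPQ]; abel
  have hL' : u' * u = J + w' * w := by rw [← hL]; abel
  have e1 : P * u' * P = P * u' := by
    rw [mul_sub, mul_one, sub_eq_zero] at hPu'; exact hPu'.symm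
  have e2 : P * R * P = P * R := by
    rw [mul_sub, mul_one, sub_eq_zero] at hPR; exact hPR.symm
  have e3 : (1 - P) * w * (1 - P) = w * (1 - P) := by
    rw [sub_mul, sub_mul, one_mul, hPw, sub_zero]
  have e4 : (1 - P) * R * (1 - P) = R * (1 - P) := by
    rw [sub_mul, sub_mul, one_mul, hPR, sub_zero]
  have f1 : P * u' * (P * R) * (P * u * J * (1 - P)) = P * R * (w' * w) * J * (1 - P) := by
    calc P * u' * (P * R) * (P * u * J * (1 - P))
        = P * u' * (P * R * P) * (u * J * (1 - P)) := by noncomm_ring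
      _ = (P * u' * P) * R * (u * J * (1 - P)) := by rw [e2]; noncomm_ring
      _ = P * (u' * R) * (u * J * (1 - P)) := by rw [e1]; noncomm_ring
      _ = P * R * (u' * u) * J * (1 - P) := by rw [hu'R]; noncomm_ring
      _ = P * R * (J * J) * (1 - P) + P * R * (w' * w) * J * (1 - P) := by
          rw [hL']; noncomm_ring
      _ = _ := by rw [hJJ, mul_one, hPR, zero_add]
  have f2 : (1 - P) * w' * ((1 - P) * R) * ((1 - P) * w * J * (1 - P))
      = (1 - P) * R * (w' * w) * J * (1 - P) := by
    calc (1 - P) * w' * ((1 - P) * R) * ((1 - P) * w * J * (1 - P))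
        = (1 - P) * w' * ((1 - P) * R * (1 - P)) * w * (J * (1 - P)) := by
          simp only [mul_assoc]
      _ = (1 - P) * w' * R * ((1 - P) * w * (1 - P)) * J := by
          rw [e4, hJQ]; simp only [mul_assoc]
      _ = (1 - P) * (w' * R) * w * ((1 - P) * J) := by rw [e3]; simp only [mul_assoc]
      _ = _ := by rw [hw'R, ← hJQ]; simp only [mul_assoc]
  have f3 : P * u * J * (R * (w' * w) * J * (1 - P)) = 0 := by
    calc P * u * J * (R * (w' * w) * J * (1 - P))
        = P * u * (J * R) * (w' * w) * J * (1 - P) := by simp only [mul_assoc]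
      _ = P * (u * R) * J * (w' * w) * J * (1 - P) := by rw [hJR]; simp only [mul_assoc]
      _ = P * R * (u * J * w') * w * J * (1 - P) := by rw [huR]; simp only [mul_assoc]
      _ = 0 := by rw [hT]; simp
  calc (P * u * J * P * u') * (P * R) * (-(P * u * J * (1 - P) * w'))
      = -(P * u * J * (P * u' * (P * R) * (P * u * J * (1 - P))) * w') := by
        simp only [mul_assoc, mul_neg]
    _ = -(P * u * J * (R * (w' * w) * J * (1 - P)) * w')
        + P * u * J * ((1 - P) * R * (w' * w) * J * (1 - P)) * w' := by
        rw [f1]; noncomm_ring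
    _ = P * u * J * ((1 - P) * w' * ((1 - P) * R) * ((1 - P) * w * J * (1 - P))) * w' := by
        rw [f3, f2]; simp
    _ = _ := by simp only [mul_assoc, mul_neg, neg_mul, neg_neg]

section Pointwise
variable {E : Type*} [AddCommGroup E] [Module ℂ E] {P Q R S u u' w w' J : Module.End ℂ E}

/-- `core_intertwine` in applied form. -/
theorem core_apply (hPQ : P + Q = 1)
    (hJJ : J * J = 1) (hJQ : J * Q = Q * J) (hJR : J * R = R * J)
    (huR : u * R = R * u) (hu'R : u' * R = R * u') (hw'R : w' * R = R * w')
    (hPu' : P * u' * Q = 0) (hPw : P * w * Q = 0) (hPR : P * R * Q = 0)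
    (hL : u' * u - w' * w = J) (hT : u * J * w' = 0) (x : E) :
    P (u (J (P (u' (P (R (P (u (J (Q (w' x))))))))))) =
      -P (u (J (Q (w' (Q (R (Q (w (J (Q (w' x))))))))))) := by
  have h := LinearMap.congr_fun (core_intertwine hPQ hJJ hJQ hJR huR hu'R hw'R hPu' hPw hPR hL
    hT) x
  simp only [Module.End.mul_apply, LinearMap.neg_apply, map_neg, neg_neg] at h
  rw [← h, neg_neg]

/-- The mirror image of `core_apply`: the roles of the two half lines and of the two block rows
are exchanged, and `J` is replaced by `-J`. -/
theorem core_apply' (hPQ : P + Q = 1)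
    (hJJ : J * J = 1) (hJP : J * P = P * J) (hJS : J * S = S * J)
    (hwS : w * S = S * w) (hw'S : w' * S = S * w') (hu'S : u' * S = S * u')
    (hQw' : Q * w' * P = 0) (hQu : Q * u * P = 0) (hQS : Q * S * P = 0)
    (hL : u' * u - w' * w = J) (hT : w * J * u' = 0) (x : E) :
    Q (w (J (Q (w' (Q (S (Q (w (J (P (u' x))))))))))) =
      -Q (w (J (P (u' (P (S (P (u (J (P (u' x))))))))))) := by
  have h := core_apply (P := Q) (Q := P) (R := S) (J := -J) (u := w) (u' := w')
    (w := u) (w' := u') (by rw [add_comm]; exact hPQ) (by rw [neg_mul_neg]; exact hJJ)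
    (by rw [neg_mul, mul_neg, hJP]) (by rw [neg_mul, mul_neg, hJS]) hwS hw'S hu'S hQw' hQu hQS
    (by rw [← hL]; abel) (by rw [mul_neg, neg_mul, hT, neg_zero]) x
  simpa only [LinearMap.neg_apply, map_neg, neg_neg] using h

end Pointwise

/-! ### Block matrices over `ℂe + L¹(ℝ)` -/

/-- Matrices over `ℂe + L¹(ℝ)` acting on vectors of `L¹(ℝ)` functions. -/
def matAct (N : Type) [Fintype N] [DecidableEq N] :
    Matrix N N Wien →+* Module.End ℂ (N → L1R) :=
  (endVecRingEquivMatrixEnd N ℂ L1R).symm.toRingHom.comp wienAct.toRingHom.mapMatrix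

theorem matAct_apply {N : Type} [Fintype N] [DecidableEq N] (M : Matrix N N Wien)
    (v : N → L1R) (i : N) : matAct N M v i = ∑ j, wienAct (M i j) (v j) := rfl

/-- A scalar operator acting on each component of a vector. -/
def dg (N : Type) (T : Module.End ℂ L1R) : Module.End ℂ (N → L1R) := T.compLeft N

theorem dg_apply {N : Type} (T : Module.End ℂ L1R) (v : N → L1R) (i : N) :
    dg N T v i = T (v i) := rfl

theorem wienAct_trn (τ : ℝ) (x : Wien) (f : L1R) :
    trn τ (wienAct x f) = wienAct x (trn τ f) := by
  induction x using Unitization.ind with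
  | inl_add_inr r a =>
    simp [wienAct, trn_mul]

theorem matAct_trn {N : Type} [Fintype N] [DecidableEq N] (M : Matrix N N Wien) (τ : ℝ) :
    matAct N M * dg N (trn τ) = dg N (trn τ) * matAct N M := by
  refine LinearMap.ext fun v => funext fun i => ?_
  simp [matAct_apply, dg_apply, wienAct_trn]

section Blocks
variable {p q : ℕ}

/-- `ρ ↦ e + ρ` on block matrices. -/
def ePlus (r : Matrix (Fin p ⊕ Fin q) (Fin p ⊕ Fin q) L1R) :
    Matrix (Fin p ⊕ Fin q) (Fin p ⊕ Fin q) Wien := 1 + r.map Unitization.inr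

theorem ePlus_act (r : Matrix (Fin p ⊕ Fin q) (Fin p ⊕ Fin q) L1R) (v : Fin p ⊕ Fin q → L1R)
    (i : Fin p ⊕ Fin q) : matAct _ (ePlus r) v i = v i + ∑ j, r i j * v j := by
  rw [ePlus, map_add, map_one]
  simp [matAct_apply, wienAct_inr]

variable (p q) in
/-- The diagonal coordinate projection onto the upper block. -/
def ee1 : Matrix (Fin p ⊕ Fin q) (Fin p ⊕ Fin q) Wien := fromBlocks 1 0 0 0
variable (p q) in
/-- The diagonal coordinate projection onto the lower block. -/
def ee2 : Matrix (Fin p ⊕ Fin q) (Fin p ⊕ Fin q) Wien := fromBlocks 0 0 0 1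

theorem sum_one_act {n : ℕ} (i : Fin n) (v : Fin n → L1R) :
    ∑ j, wienAct ((1 : Matrix (Fin n) (Fin n) Wien) i j) (v j) = v i := by
  rw [Finset.sum_eq_single i]
  · simp
  · intro j _ hj
    rw [Matrix.one_apply_ne hj.symm, map_zero, LinearMap.zero_apply]
  · simp

theorem ee1_act (v : Fin p ⊕ Fin q → L1R) :
    matAct _ (ee1 p q) v = Sum.elim (fun i => v (.inl i)) (0 : Fin q → L1R) := by
  funext i
  rcases i with i | i
  · simpa [matAct_apply, ee1] using sum_one_act i fun i => v (.inl i)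
  · simp [matAct_apply, ee1]

theorem ee2_act (v : Fin p ⊕ Fin q → L1R) :
    matAct _ (ee2 p q) v = Sum.elim (0 : Fin p → L1R) (fun i => v (.inr i)) := by
  funext i
  rcases i with i | i
  · simp [matAct_apply, ee2]
  · simpa [matAct_apply, ee2] using sum_one_act i fun i => v (.inr i)

variable {A As : Matrix (Fin p) (Fin p) L1R} {B Cs : Matrix (Fin p) (Fin q) L1R}
  {C Bs : Matrix (Fin q) (Fin p) L1R} {D Ds : Matrix (Fin q) (Fin q) L1R}

theorem map_inr_mul {k m n : Type} [Fintype m] (X : Matrix k m L1R) (Y : Matrix m n L1R) :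
    (X * Y).map (Unitization.inr : L1R → Wien) = X.map Unitization.inr * Y.map Unitization.inr := by
  ext1 i j
  refine (map_sum (Unitization.inrNonUnitalAlgHom ℂ L1R) (fun l => X i l * Y l j) _).trans ?_
  exact Finset.sum_congr rfl fun l _ => map_mul (Unitization.inrNonUnitalAlgHom ℂ L1R) _ _

theorem ee_sub : ee1 p q - ee2 p q = fromBlocks 1 0 0 (-1) := by
  rw [sub_eq_add_neg, ee1, ee2, fromBlocks_neg, fromBlocks_add]
  simp

/-- The four block entries of `U* J U = J`, where `U` is the identity plus a block matrix and
`J = diag(1, -1)`. -/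
theorem block_left_ring {K : Type*} [CommRing K]
    {A As : Matrix (Fin p) (Fin p) K} {B Cs : Matrix (Fin p) (Fin q) K}
    {C Bs : Matrix (Fin q) (Fin p) K} {D Ds : Matrix (Fin q) (Fin q) K}
    (h1 : As + A + As * A - Cs * C = 0) (h2 : Ds + D + Ds * D - Bs * B = 0)
    (h3 : B + As * B = Cs + Cs * D) (h4 : Bs + Bs * A = C + Ds * C) :
    (1 + fromBlocks As Cs Bs Ds) * fromBlocks 1 0 0 (-1) * (1 + fromBlocks A B C D) =
      fromBlocks 1 0 0 (-1) := by
  simp only [← fromBlocks_one, fromBlocks_add,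
    fromBlocks_multiply, zero_add, add_zero, Matrix.mul_one, Matrix.mul_zero, Matrix.mul_neg]
  congr 1
  · rw [← sub_eq_zero]; refine Eq.trans ?_ h1
    simp only [Matrix.add_mul, Matrix.mul_add, Matrix.one_mul, Matrix.mul_one, Matrix.neg_mul]
    abel
  · rw [← sub_eq_zero]; refine Eq.trans ?_ (sub_eq_zero.2 h3)
    simp only [Matrix.add_mul, Matrix.mul_add, Matrix.one_mul, Matrix.mul_one, Matrix.neg_mul]
    abel
  · rw [← sub_eq_zero]; refine Eq.trans ?_ (sub_eq_zero.2 h4)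
    simp only [Matrix.add_mul, Matrix.mul_add, Matrix.one_mul, Matrix.mul_one, Matrix.neg_mul]
    abel
  · rw [← sub_eq_zero, ← neg_eq_zero]; refine Eq.trans ?_ h2
    simp only [Matrix.add_mul, Matrix.mul_add, Matrix.one_mul, Matrix.mul_one, Matrix.neg_mul]
    abel

theorem block_left (h1 : As + A + As * A - Cs * C = 0) (h2 : Ds + D + Ds * D - Bs * B = 0)
    (h3 : B + As * B = Cs + Cs * D) (h4 : Bs + Bs * A = C + Ds * C) :
    ePlus (fromBlocks As Cs Bs Ds) * (ee1 p q - ee2 p q) * ePlus (fromBlocks A B C D) =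
      ee1 p q - ee2 p q := by
  have m := fun {k l : Type} (X Y : Matrix k l L1R) (h : X = Y) =>
    congrArg (fun Z : Matrix k l L1R => Z.map (Unitization.inr : L1R → Wien)) h
  have inradd : ∀ {k l : Type} (X Y : Matrix k l L1R), (X + Y).map (Unitization.inr : L1R → Wien) =
      X.map Unitization.inr + Y.map Unitization.inr := fun X Y => by ext1; simp
  have inrsub : ∀ {k l : Type} (X Y : Matrix k l L1R), (X - Y).map (Unitization.inr : L1R → Wien) =
      X.map Unitization.inr - Y.map Unitization.inr := fun X Y => by ext1; simp
  have inrzero : ∀ {k l : Type}, (0 : Matrix k l L1R).map (Unitization.inr : L1R → Wien) = 0 := by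
    intro k l; ext1; simp
  replace h1 := m _ _ h1
  replace h2 := m _ _ h2
  replace h3 := m _ _ h3
  replace h4 := m _ _ h4
  simp only [inradd, inrsub, inrzero, map_inr_mul] at h1 h2 h3 h4
  rw [ee_sub, ePlus, ePlus, fromBlocks_map, fromBlocks_map]
  exact block_left_ring h1 h2 h3 h4

theorem ee_sq : (ee1 p q - ee2 p q) * (ee1 p q - ee2 p q) = 1 := by
  simp [ee_sub, fromBlocks_multiply]

/-- Over a commutative ring a left inverse of a square matrix is a right inverse, so
`U* J U = J` gives `U J U* = J`. -/
theorem block_right {U Us : Matrix (Fin p ⊕ Fin q) (Fin p ⊕ Fin q) Wien}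
    (h : Us * (ee1 p q - ee2 p q) * U = ee1 p q - ee2 p q) :
    U * (ee1 p q - ee2 p q) * Us = ee1 p q - ee2 p q := by
  set K := ee1 p q - ee2 p q
  have hK : K * K = 1 := ee_sq
  have h1 : (K * Us * K) * U = 1 := by
    calc K * Us * K * U = K * (Us * K * U) := by simp only [mul_assoc]
      _ = 1 := by rw [h, hK]
  have h2 : U * (K * Us * K) = 1 := mul_eq_one_comm.1 h1
  calc U * K * Us = U * (K * Us * K) * K := by
        simp only [mul_assoc, hK, mul_one]
    _ = K := by rw [h2, one_mul]

end Blocks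

section Blocks2
variable {p q : ℕ}

theorem ee1_sq : ee1 p q * ee1 p q = ee1 p q := by simp [ee1, fromBlocks_multiply]

theorem ee2_sq : ee2 p q * ee2 p q = ee2 p q := by simp [ee2, fromBlocks_multiply]

theorem ee1_ee_ee2 : ee1 p q * (ee1 p q - ee2 p q) * ee2 p q = 0 := by
  rw [ee_sub]; simp [ee1, ee2, fromBlocks_multiply]

theorem ee2_ee_ee1 : ee2 p q * (ee1 p q - ee2 p q) * ee1 p q = 0 := by
  rw [ee_sub]; simp [ee1, ee2, fromBlocks_multiply]

end Blocks2

/-! ### Extension by zero from the half lines -/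

section Extension
variable {n : ℕ} {s : Set ℝ} {μ : Measure ℝ}

theorem ex_integrable (hs : MeasurableSet s) (hμ : μ = volume.restrict s)
    (f : Lp (Fin n → ℂ) 1 μ) (i : Fin n) :
    Integrable (s.indicator fun t => f t i) volume := by
  rw [integrable_indicator_iff hs, IntegrableOn, ← hμ]
  exact (L1.integrable_coeFn f).eval i

/-- The components of a vector function in `L¹(s)`, extended by zero to `L¹(ℝ)`. -/
def ex (hs : MeasurableSet s) (hμ : μ = volume.restrict s) (f : Lp (Fin n → ℂ) 1 μ) :
    Fin n → L1R := fun i => (ex_integrable hs hμ f i).toL1 _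

theorem ex_coe (hs : MeasurableSet s) (hμ : μ = volume.restrict s)
    (f : Lp (Fin n → ℂ) 1 μ) (i : Fin n) :
    ⇑(ex hs hμ f i) =ᵐ[volume] s.indicator fun t => f t i :=
  (ex_integrable hs hμ f i).coeFn_toL1

theorem ae_of_restrict (hs : MeasurableSet s) (hμ : μ = volume.restrict s) {p : ℝ → Prop}
    (h : ∀ᵐ t ∂μ, p t) : ∀ᵐ t, t ∈ s → p t := by
  rw [hμ] at h; exact (ae_restrict_iff' hs).1 h

theorem integrable_restrict (hs : MeasurableSet s) (hμ : μ = volume.restrict s) {F : ℝ → ℂ} :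
    Integrable (s.indicator F) volume ↔ Integrable F μ := by
  rw [hμ]; exact integrable_indicator_iff hs

theorem integral_restrict (hs : MeasurableSet s) (hμ : μ = volume.restrict s) (F : ℝ → ℂ) :
    ∫ x, F x ∂μ = ∫ x, s.indicator F x := by
  rw [hμ]; exact (integral_indicator hs).symm

theorem ex_injective (hs : MeasurableSet s) (hμ : μ = volume.restrict s) :
    Function.Injective (ex (n := n) hs hμ) := by
  intro f g h
  apply Lp.ext
  have h1 : ∀ i, ∀ᵐ t, t ∈ s → f t i = g t i := by
    intro i
    have h2 := ex_coe hs hμ f i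
    rw [h] at h2
    filter_upwards [h2, ex_coe hs hμ g i] with t h3 h4 ht
    rw [h3, indicator_of_mem ht, indicator_of_mem ht] at h4
    exact h4
  have h2 : ∀ᵐ t ∂(volume.restrict s), ∀ i, f t i = g t i := by
    rw [ae_restrict_iff' hs]
    filter_upwards [ae_all_iff.2 h1] with t ht hts i using ht i hts
  rw [← hμ] at h2
  filter_upwards [h2] with t ht using funext ht

/-- Identifies the extension of `g` with the restriction of an `L¹(ℝ)` function. -/
theorem ex_eq (hs : MeasurableSet s) (hμ : μ = volume.restrict s) {g : Lp (Fin n → ℂ) 1 μ}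
    {G : ℝ → Fin n → ℂ} (hg : ⇑g =ᵐ[μ] G) {i : Fin n} {v : L1R}
    (h : ∀ᵐ t, t ∈ s → G t i = v t) : ex hs hμ g i = prj hs v := by
  apply Lp.ext
  filter_upwards [ex_coe hs hμ g i, prj_coe hs v, ae_of_restrict hs hμ hg, h] with t h1 h2 h3 h4
  rw [h1, h2]
  by_cases ht : t ∈ s
  · simp [ht, h3 ht, h4 ht]
  · simp [ht]

theorem prj_ex (hs : MeasurableSet s) (hμ : μ = volume.restrict s) (g : Lp (Fin n → ℂ) 1 μ)
    (i : Fin n) : prj hs (ex hs hμ g i) = ex hs hμ g i := by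
  refine (ex_eq hs hμ (Filter.EventuallyEq.refl _ _) ?_).symm
  filter_upwards [ex_coe hs hμ g i] with t h1 ht
  rw [h1, indicator_of_mem ht]

theorem ex_sub (hs : MeasurableSet s) (hμ : μ = volume.restrict s) (f g : Lp (Fin n → ℂ) 1 μ) :
    ex hs hμ (f - g) = ex hs hμ f - ex hs hμ g := by
  funext i
  have h : ex hs hμ (f - g) i = prj hs (ex hs hμ f i - ex hs hμ g i) := by
    refine ex_eq hs hμ (Lp.coeFn_sub f g) ?_
    filter_upwards [ex_coe hs hμ f i, ex_coe hs hμ g i,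
      Lp.coeFn_sub (ex hs hμ f i) (ex hs hμ g i)] with t h1 h2 h3 ht
    rw [h3, Pi.sub_apply, Pi.sub_apply, Pi.sub_apply, h1, h2, indicator_of_mem ht,
      indicator_of_mem ht]
  rw [h, map_sub, prj_ex, prj_ex]; rfl

/-- A half-line convolution integral is the convolution on `ℝ` with the extension by zero. -/
theorem conv_ex {k : ℕ} (hs : MeasurableSet s) (hμ : μ = volume.restrict s) {r : MatF k n}
    (hr : ∀ i j, Integrable (fun t => r t i j) volume) (f : Lp (Fin n → ℂ) 1 μ) (i : Fin k) :
    ∀ᵐ t, (∫ x, (r (t - x)).mulVec (f x) ∂μ) i = (cls r hr *ᵥ ex hs hμ f) i t := by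
  have h1 : ∀ j, ∀ᵐ t, (cls r hr i j * ex hs hμ f j : L1R) t =
      ∫ x, r (t - x) i j * s.indicator (fun x => f x j) x := by
    intro j
    filter_upwards [l1_coe_mul (cls r hr i j) (ex hs hμ f j)] with t ht
    rw [ht, scv_congr (cls_coe hr i j) (ex_coe hs hμ f j), scv_swap]
  have h2 := ae_all_iff.2 fun i => ae_all_iff.2 fun j =>
    ae_integrable_swap (hr i j) (ex_integrable hs hμ f j)
  filter_upwards [l1_coe_sum Finset.univ fun j => cls r hr i j * ex hs hμ f j,
    ae_all_iff.2 h1, h2] with t h3 h4 h5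
  have h6 : ∀ i j, Integrable (fun x => r (t - x) i j * f x j) μ := by
    intro i j
    have := h5 i j
    refine (integrable_restrict hs hμ).1 ?_
    refine this.congr (Filter.Eventually.of_forall fun x => ?_)
    by_cases hx : x ∈ s <;> simp [hx]
  have h7 : (cls r hr *ᵥ ex hs hμ f) i = ∑ j, cls r hr i j * ex hs hμ f j := rfl
  have h8 : ∀ i, Integrable (fun x => ((r (t - x)).mulVec (f x)) i) μ := fun i =>
    integrable_finsetSum Finset.univ fun j _ => h6 i j
  rw [h7, h3, eval_integral h8]
  simp only [Matrix.mulVec, dotProduct]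
  rw [integral_finsetSum _ fun j _ => h6 i j]
  refine Finset.sum_congr rfl fun j _ => ?_
  rw [h4, integral_restrict hs hμ]
  congr 1; ext x
  by_cases hx : x ∈ s <;> simp [hx]

variable {k : ℕ} {s' : Set ℝ} {μ' : Measure ℝ}

theorem ex_hankel (hs : MeasurableSet s) (hμ : μ = volume.restrict s)
    (hs' : MeasurableSet s') (hμ' : μ' = volume.restrict s') {r : MatF k n}
    (hr : ∀ i j, Integrable (fun t => r t i j) volume) {f : Lp (Fin n → ℂ) 1 μ}
    {g : Lp (Fin k → ℂ) 1 μ'} (hg : ⇑g =ᵐ[μ'] fun t => ∫ x, (r (t - x)).mulVec (f x) ∂μ) :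
    ex hs' hμ' g = fun i => prj hs' ((cls r hr *ᵥ ex hs hμ f) i) := by
  funext i
  refine ex_eq hs' hμ' hg ?_
  filter_upwards [conv_ex hs hμ hr f i] with t h1 _ using h1

theorem ex_toep0 (hs : MeasurableSet s) (hμ : μ = volume.restrict s) {r : MatF k n}
    (hr : ∀ i j, Integrable (fun t => r t i j) volume) {f : Lp (Fin n → ℂ) 1 μ}
    {g : Lp (Fin k → ℂ) 1 μ} (hg : ⇑g =ᵐ[μ] fun t => (0 : Matrix (Fin k) (Fin n) ℂ).mulVec (f t) +
      ∫ x, (r (t - x)).mulVec (f x) ∂μ) :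
    ex hs hμ g = fun i => prj hs ((cls r hr *ᵥ ex hs hμ f) i) := by
  refine ex_hankel hs hμ hs hμ hr ?_
  simpa only [Matrix.zero_mulVec, zero_add] using hg

theorem ex_toep1 (hs : MeasurableSet s) (hμ : μ = volume.restrict s) {r : MatF n n}
    (hr : ∀ i j, Integrable (fun t => r t i j) volume) {f g : Lp (Fin n → ℂ) 1 μ}
    (hg : ⇑g =ᵐ[μ] fun t => (1 : Matrix (Fin n) (Fin n) ℂ).mulVec (f t) +
      ∫ x, (r (t - x)).mulVec (f x) ∂μ) :
    ex hs hμ g = fun i => prj hs (ex hs hμ f i + (cls r hr *ᵥ ex hs hμ f) i) := by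
  funext i
  refine ex_eq hs hμ hg ?_
  filter_upwards [conv_ex hs hμ hr f i, ex_coe hs hμ f i,
    Lp.coeFn_add (ex hs hμ f i) ((cls r hr *ᵥ ex hs hμ f) i)] with t h1 h2 h3 ht
  rw [h3, Pi.add_apply, Pi.add_apply, h1, h2, indicator_of_mem ht, Matrix.one_mulVec]

end Extension

theorem μP_def : μP = volume.restrict (Ici 0) := rfl

theorem μM_def : μM = volume.restrict (Iic 0) := rfl

/-- Extension by zero from `L¹(ℝ₊)ⁿ`. -/
abbrev exP {n : ℕ} (f : L1P n) : Fin n → L1R := ex meas_Ici μP_def f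
/-- Extension by zero from `L¹(ℝ₋)ⁿ`. -/
abbrev exM {n : ℕ} (f : L1M n) : Fin n → L1R := ex meas_Iic μM_def f

theorem exP_coe {n : ℕ} (f : L1P n) (i : Fin n) :
    ∀ᵐ t, exP f i t = (Ici 0).indicator (fun t => f t i) t := ex_coe meas_Ici μP_def f i

theorem exM_coe {n : ℕ} (f : L1M n) (i : Fin n) :
    ∀ᵐ t, exM f i t = (Iic 0).indicator (fun t => f t i) t := ex_coe meas_Iic μM_def f i

theorem pP_exM {n : ℕ} (f : L1M n) (i : Fin n) : pP (exM f i) = 0 := by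
  rw [exM, ← prj_ex]; exact LinearMap.congr_fun pP_pM _

theorem pM_exP {n : ℕ} (f : L1P n) (i : Fin n) : pM (exP f i) = 0 := by
  rw [exP, ← prj_ex]; exact LinearMap.congr_fun pM_pP _

theorem ae_shift {p : ℝ → Prop} (h : ∀ᵐ t, p t) (τ : ℝ) : ∀ᵐ t, p (t + τ) :=
  (measurePreserving_add_right volume τ).quasiMeasurePreserving.ae h

theorem ae_flip {p : ℝ → Prop} (h : ∀ᵐ t : ℝ, p t) : ∀ᵐ t : ℝ, p (-t) :=
  (Measure.measurePreserving_neg volume).quasiMeasurePreserving.ae h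

theorem ex_shiftStar {n : ℕ} {τ : ℝ} (hτ : 0 ≤ τ) {V : L1P n →L[ℂ] L1P n} (hV : IsShiftStarP τ V)
    (f : L1P n) : exP (V f) = fun i => pP (trn τ (exP f i)) := by
  funext i
  refine ex_eq meas_Ici μP_def (hV f) ?_
  filter_upwards [trn_coe τ (exP f i), ae_shift (exP_coe f i) τ] with t h1 h2 ht
  rw [h1, h2, indicator_of_mem]
  simp only [mem_Ici] at *; linarith

theorem ex_shift {n : ℕ} {τ : ℝ} {V : L1P n →L[ℂ] L1P n} (hV : IsShiftP τ V)
    (f : L1P n) : exP (V f) = fun i => pP (trn (-τ) (exP f i)) := by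
  funext i
  refine ex_eq meas_Ici μP_def (hV f) ?_
  filter_upwards [trn_coe (-τ) (exP f i), ae_shift (exP_coe f i) (-τ)] with t h1 h2 ht
  rw [h1, h2]
  by_cases h : τ ≤ t
  · rw [if_pos h, indicator_of_mem (by simpa using h), sub_eq_add_neg]
  · rw [if_neg h, indicator_of_notMem (by simpa using h)]; rfl

/-- The flipped right translation `J V_τ J` on `L¹(ℝ₋)ⁿ` is the left translation by `τ`, cut off
to `ℝ₋`. -/
theorem ex_flip_shift {n : ℕ} {τ : ℝ} {V : L1P n →L[ℂ] L1P n} (hV : IsShiftP τ V)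
    {J : L1P n →L[ℂ] L1M n} (hJ : IsFlipPM J) {J' : L1M n →L[ℂ] L1P n} (hJ' : IsFlipMP J')
    (f : L1M n) : exM (J (V (J' f))) = fun i => pM (trn τ (exM f i)) := by
  funext i
  refine ex_eq meas_Iic μM_def (hJ _) ?_
  have h1 := ae_flip (ae_of_restrict meas_Ici μP_def (hV (J' f)))
  have h2 := ae_shift (ae_flip (ae_of_restrict meas_Ici μP_def (hJ' f))) τ
  filter_upwards [trn_coe τ (exM f i), ae_shift (exM_coe f i) τ, h1, h2] with t h3 h4 h5 h6 ht
  rw [h3, h4, h5 (by simpa using ht)]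
  by_cases h : t + τ ≤ 0
  · rw [if_pos (by linarith), indicator_of_mem (by simpa using h),
      show -t - τ = -(t + τ) by ring, h6 (by simp only [mem_Ici]; linarith), neg_neg]
  · rw [if_neg (by linarith), indicator_of_notMem (by simpa using h)]; rfl

/-- The flipped adjoint translation `J V_τ* J` on `L¹(ℝ₋)ⁿ` is the right translation by `τ`, cut
off to `ℝ₋`. -/
theorem ex_flip_shiftStar {n : ℕ} {τ : ℝ} (hτ : 0 ≤ τ) {V : L1P n →L[ℂ] L1P n}
    (hV : IsShiftStarP τ V)
    {J : L1P n →L[ℂ] L1M n} (hJ : IsFlipPM J) {J' : L1M n →L[ℂ] L1P n} (hJ' : IsFlipMP J')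
    (f : L1M n) : exM (J (V (J' f))) = fun i => pM (trn (-τ) (exM f i)) := by
  funext i
  refine ex_eq meas_Iic μM_def (hJ _) ?_
  have h1 := ae_flip (ae_of_restrict meas_Ici μP_def (hV (J' f)))
  have h2 := ae_shift (ae_flip (ae_of_restrict meas_Ici μP_def (hJ' f))) (-τ)
  filter_upwards [trn_coe (-τ) (exM f i), ae_shift (exM_coe f i) (-τ), h1, h2]
    with t h3 h4 h5 h6 ht
  simp only [mem_Iic] at ht
  rw [h3, h4, h5 (by simpa using ht), indicator_of_mem (by simp only [mem_Iic]; linarith),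
    show -t + τ = -(t + -τ) by ring, h6 (by simp only [mem_Ici]; linarith), neg_neg]

/-! ### Block symbols acting on vectors -/

theorem pM_cls_pP {k m : ℕ} {r : MatF k m} (hr : L1Plus r) (v : Fin m → L1R) (i : Fin k) :
    pM ((cls r hr.1 *ᵥ fun j => pP (v j)) i) = 0 := by
  have h : (cls r hr.1 *ᵥ fun j => pP (v j)) i = ∑ j, cls r hr.1 i j * pP (v j) := rfl
  rw [h, map_sum]
  exact Finset.sum_eq_zero fun j _ =>
    pM_mul_pP (hr.1 i j) (fun t ht => by rw [hr.2 t ht]; rfl) (v j)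

theorem pP_cls_pM {k m : ℕ} {r : MatF k m} (hr : L1Minus r) (v : Fin m → L1R) (i : Fin k) :
    pP ((cls r hr.1 *ᵥ fun j => pM (v j)) i) = 0 := by
  have h : (cls r hr.1 *ᵥ fun j => pM (v j)) i = ∑ j, cls r hr.1 i j * pM (v j) := rfl
  rw [h, map_sum]
  exact Finset.sum_eq_zero fun j _ =>
    pP_mul_pM (hr.1 i j) (fun t ht => by rw [hr.2 t ht]; rfl) (v j)

section BlockAction
variable {p q : ℕ}

theorem blk_act (A : Matrix (Fin p) (Fin p) L1R) (B : Matrix (Fin p) (Fin q) L1R)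
    (C : Matrix (Fin q) (Fin p) L1R) (D : Matrix (Fin q) (Fin q) L1R)
    (v : Fin p → L1R) (w : Fin q → L1R) :
    matAct _ (ePlus (fromBlocks A B C D)) (Sum.elim v w) =
      Sum.elim (v + A *ᵥ v + B *ᵥ w) (w + C *ᵥ v + D *ᵥ w) := by
  funext i
  rw [ePlus_act]
  rcases i with i | i
  · simp [Fintype.sum_sum_type, Matrix.mulVec, dotProduct, add_assoc]
  · simp [Fintype.sum_sum_type, Matrix.mulVec, dotProduct, add_assoc]

theorem dg_elim (T : Module.End ℂ L1R) (v : Fin p → L1R) (w : Fin q → L1R) :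
    dg _ T (Sum.elim v w) = Sum.elim (fun i => T (v i)) (fun i => T (w i)) := by
  funext i
  rcases i with i | i <;> rfl

theorem ee1_elim (v : Fin p → L1R) (w : Fin q → L1R) :
    matAct _ (ee1 p q) (Sum.elim v w) = Sum.elim v (0 : Fin q → L1R) := ee1_act _

theorem ee2_elim (v : Fin p → L1R) (w : Fin q → L1R) :
    matAct _ (ee2 p q) (Sum.elim v w) = Sum.elim (0 : Fin p → L1R) w := ee2_act _

theorem ee_elim (v : Fin p → L1R) (w : Fin q → L1R) :
    matAct _ (ee1 p q - ee2 p q) (Sum.elim v w) = Sum.elim v (-w) := by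
  rw [map_sub, LinearMap.sub_apply, ee1_elim, ee2_elim]
  funext i
  rcases i with i | i <;> simp

theorem end_ext {S T : Module.End ℂ (Fin p ⊕ Fin q → L1R)}
    (h : ∀ v w, S (Sum.elim v w) = T (Sum.elim v w)) : S = T :=
  LinearMap.ext fun x => by rw [← Sum.elim_comp_inl_inr x]; exact h _ _

theorem ee_dg (T : Module.End ℂ L1R) :
    matAct _ (ee1 p q - ee2 p q) * dg _ T = dg _ T * matAct _ (ee1 p q - ee2 p q) := by
  refine end_ext fun v w => ?_
  rw [Module.End.mul_apply, Module.End.mul_apply, dg_elim, ee_elim, ee_elim, dg_elim]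
  congr 1
  funext i
  simp

theorem elim_zero : Sum.elim (0 : Fin p → L1R) (0 : Fin q → L1R) = 0 := by
  funext i
  rcases i with i | i <;> rfl

end BlockAction

theorem cls_congr_zero {k m : ℕ} {X : Matrix (Fin k) (Fin m) L1R}
    {F : MatF k m} (hX : ∀ i j, ∀ᵐ t, X i j t = F t i j) (hF : ∀ᵐ t, F t = 0) : X = 0 := by
  ext1 i j
  apply Lp.ext
  filter_upwards [hX i j, hF, Lp.coeFn_zero ℂ 1 (volume : Measure ℝ)] with t h1 h2 h3
  rw [h1, h2, Matrix.zero_apply, Matrix.zero_apply, h3]; rfl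

/-- The first two identities of `CondL1`, as identities in the convolution algebra. -/
theorem cls_rel1 {p q : ℕ} {a a' : MatF p p} {c' : MatF p q} {c : MatF q p}
    (ha : ∀ i j, Integrable (fun t => a t i j) volume)
    (ha' : ∀ i j, Integrable (fun t => a' t i j) volume)
    (hc : ∀ i j, Integrable (fun t => c t i j) volume)
    (hc' : ∀ i j, Integrable (fun t => c' t i j) volume)
    (h : ∀ᵐ t, a' t + a t + conv a' a t - conv c' c t = 0) :
    cls a' ha' + cls a ha + cls a' ha' * cls a ha - cls c' hc' * cls c hc = 0 := by
  refine cls_congr_zero (fun i j => ?_) h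
  have e : ∀ X Y Z W : L1R, ∀ᵐ t, (X + Y + Z - W) t = X t + Y t + Z t - W t := by
    intro X Y Z W
    filter_upwards [Lp.coeFn_sub (X + Y + Z) W, Lp.coeFn_add (X + Y) Z, Lp.coeFn_add X Y]
      with t h1 h2 h3
    rw [h1, Pi.sub_apply, h2, Pi.add_apply, h3, Pi.add_apply]
  filter_upwards [cls_coe ha i j, cls_coe ha' i j, cls_mul_coe ha' ha i j, cls_mul_coe hc' hc i j,
    e (cls a' ha' i j) (cls a ha i j) ((cls a' ha' * cls a ha) i j) ((cls c' hc' * cls c hc) i j)]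
    with t h1 h2 h3 h4 h5
  simp only [Matrix.sub_apply, Matrix.add_apply]
  rw [h5, h1, h2, h3, h4]

/-- The third identity of `CondL1` and its adjoint, as identities in the convolution algebra. -/
theorem cls_rel2 {k l m n : ℕ} {b : MatF k l} {a : MatF k m} {b' : MatF m l}
    {c : MatF k l} {c' : MatF k n} {d : MatF n l}
    (hb : ∀ i j, Integrable (fun t => b t i j) volume)
    (ha : ∀ i j, Integrable (fun t => a t i j) volume)
    (hb' : ∀ i j, Integrable (fun t => b' t i j) volume)
    (hc : ∀ i j, Integrable (fun t => c t i j) volume)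
    (hc' : ∀ i j, Integrable (fun t => c' t i j) volume)
    (hd : ∀ i j, Integrable (fun t => d t i j) volume)
    (h : ∀ᵐ t, b t + conv a b' t = c t + conv c' d t) :
    cls b hb + cls a ha * cls b' hb' = cls c hc + cls c' hc' * cls d hd := by
  ext1 i j
  apply Lp.ext
  filter_upwards [cls_coe hb i j, cls_coe hc i j, cls_mul_coe ha hb' i j, cls_mul_coe hc' hd i j, h,
    Lp.coeFn_add (cls b hb i j) ((cls a ha * cls b' hb') i j),
    Lp.coeFn_add (cls c hc i j) ((cls c' hc' * cls d hd) i j)]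
    with t h1 h2 h3 h4 h5 h6 h7
  rw [Matrix.add_apply, Matrix.add_apply, h6, h7, Pi.add_apply, Pi.add_apply, h1, h2, h3, h4]
  exact congrFun (congrFun h5 i) j

/-- The adjoint of the third identity in `CondL1`. -/
theorem CondL1.adj {p q : ℕ} {a : MatF p p} {b : MatF p q} {c : MatF q p} {d : MatF q q}
    (h : CondL1 a b c d) :
    ∀ᵐ t, adjF b t + conv (adjF b) a t = c t + conv (adjF d) c t := by
  filter_upwards [ae_flip h.2.2] with t ht
  have e1 : conv (adjF b) a t = (conv (adjF a) b (-t))ᴴ := by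
    have := congrFun (adjF_conv (adjF a) b) t
    rw [adjF_adjF] at this
    exact this.symm
  have e2 : conv (adjF d) c t = (conv (adjF c) d (-t))ᴴ := by
    have := congrFun (adjF_conv (adjF c) d) t
    rw [adjF_adjF] at this
    exact this.symm
  have e3 : c t = (adjF c (-t))ᴴ := by simp [adjF]
  rw [e1, e2, e3, adjF, ← Matrix.conjTranspose_add, ht, Matrix.conjTranspose_add]

/-! ### The intertwining relations -/

/-- Lemma 7.8: intertwining relations for the operators `Mᵢⱼ` with the
translation operators. -/
theorem stmt9 {p q : ℕ}
    (a : MatF p p) (b : MatF p q) (c : MatF q p) (d : MatF q q)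
    (ha : L1Plus a) (hb : L1Plus b) (hc : L1Minus c) (hd : L1Minus d)
    (hL1 : CondL1 a b c d)
    (Tpα : L1P p →L[ℂ] L1P p) (hTpα : IsTP 1 a Tpα)
    (Tpαs : L1P p →L[ℂ] L1P p) (hTpαs : IsTP 1 (adjF a) Tpαs)
    (Tpβ : L1P q →L[ℂ] L1P p) (hTpβ : IsTP 0 b Tpβ)
    (Tpβs : L1P p →L[ℂ] L1P q) (hTpβs : IsTP 0 (adjF b) Tpβs)
    (Tmδ : L1M q →L[ℂ] L1M q) (hTmδ : IsTM 1 d Tmδ)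
    (Tmδs : L1M q →L[ℂ] L1M q) (hTmδs : IsTM 1 (adjF d) Tmδs)
    (Tmγ : L1M p →L[ℂ] L1M q) (hTmγ : IsTM 0 c Tmγ)
    (Tmγs : L1M q →L[ℂ] L1M p) (hTmγs : IsTM 0 (adjF c) Tmγs)
    (Hpα : L1M p →L[ℂ] L1P p) (hHpα : IsHP a Hpα)
    (Hpβ : L1M q →L[ℂ] L1P p) (hHpβ : IsHP b Hpβ)
    (Hmγ : L1P p →L[ℂ] L1M q) (hHmγ : IsHM c Hmγ)
    (Hmδ : L1P q →L[ℂ] L1M q) (hHmδ : IsHM d Hmδ)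
    (τ : ℝ) (hτ : 0 ≤ τ)
    (Vp : L1P p →L[ℂ] L1P p) (hVp : IsShiftP τ Vp)
    (Vps : L1P p →L[ℂ] L1P p) (hVps : IsShiftStarP τ Vps)
    (Vq : L1P q →L[ℂ] L1P q) (hVq : IsShiftP τ Vq)
    (Vqs : L1P q →L[ℂ] L1P q) (hVqs : IsShiftStarP τ Vqs)
    (Jqp : L1P q →L[ℂ] L1M q) (hJqp : IsFlipPM Jqp)
    (Jqm : L1M q →L[ℂ] L1P q) (hJqm : IsFlipMP Jqm) :
    ((Tpα.comp Tpαs - Tpβ.comp Tpβs).comp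
        (Vps.comp (Hpβ.comp Tmδs - Hpα.comp Tmγs)) =
      (Hpβ.comp Tmδs - Hpα.comp Tmγs).comp
        (Jqp.comp (Vq.comp (Jqm.comp (Tmδ.comp Tmδs - Tmγ.comp Tmγs))))) ∧
    ((Tmδ.comp Tmδs - Tmγ.comp Tmγs).comp
        (Jqp.comp (Vqs.comp (Jqm.comp (Hmγ.comp Tpαs - Hmδ.comp Tpβs)))) =
      (Hmγ.comp Tpαs - Hmδ.comp Tpβs).comp
        (Vp.comp (Tpα.comp Tpαs - Tpβ.comp Tpβs))) ∧
    (∀ (N₁₁ : L1P p →L[ℂ] L1P p) (N₂₂ : L1M q →L[ℂ] L1M q),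
      N₁₁.comp (Tpα.comp Tpαs - Tpβ.comp Tpβs) = ContinuousLinearMap.id ℂ (L1P p) →
      (Tpα.comp Tpαs - Tpβ.comp Tpβs).comp N₁₁ = ContinuousLinearMap.id ℂ (L1P p) →
      N₂₂.comp (Tmδ.comp Tmδs - Tmγ.comp Tmγs) = ContinuousLinearMap.id ℂ (L1M q) →
      (Tmδ.comp Tmδs - Tmγ.comp Tmγs).comp N₂₂ = ContinuousLinearMap.id ℂ (L1M q) →
      Vps.comp ((Hpβ.comp Tmδs - Hpα.comp Tmγs).comp N₂₂) =
        N₁₁.comp ((Hpβ.comp Tmδs - Hpα.comp Tmγs).comp (Jqp.comp (Vq.comp Jqm))) ∧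
      Jqp.comp (Vqs.comp (Jqm.comp ((Hmγ.comp Tpαs - Hmδ.comp Tpβs).comp N₁₁))) =
        N₂₂.comp ((Hmγ.comp Tpαs - Hmδ.comp Tpβs).comp Vp)) := by
  obtain ⟨hL1a, hL1d, hL1b⟩ := id hL1
  have has := ha.adjF
  have hbs := hb.adjF
  have hcs := hc.adjF
  have hds := hd.adjF
  have hblk := block_left (cls_rel1 ha.1 has.1 hc.1 hcs.1 hL1a)
    (cls_rel1 hd.1 hds.1 hb.1 hbs.1 hL1d)
    (cls_rel2 hb.1 has.1 hb.1 hcs.1 hcs.1 hd.1 hL1b)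
    (cls_rel2 hbs.1 hbs.1 ha.1 hc.1 hds.1 hc.1 hL1.adj)
  have hblk' := block_right hblk
  have hU := blk_act (cls a ha.1) (cls b hb.1) (cls c hc.1) (cls d hd.1)
  have hUs := blk_act (cls _ has.1) (cls _ hcs.1) (cls _ hbs.1) (cls _ hds.1)
  set mU := ePlus (fromBlocks (cls a ha.1) (cls b hb.1) (cls c hc.1) (cls d hd.1)) with hmU
  set mUs := ePlus (fromBlocks (cls _ has.1) (cls _ hcs.1) (cls _ hbs.1) (cls _ hds.1)) with hmUs
  -- `P`, `Q` restrict to the half lines, `R`, `S` translate left and right, `J = diag(1, -1)`.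
  let N := Fin p ⊕ Fin q
  let P := dg N pP
  let Q := dg N pM
  let R := dg N (trn τ)
  let S := dg N (trn (-τ))
  let J := matAct N (ee1 p q - ee2 p q)
  let u := matAct N (ee1 p q * mU)
  let w := matAct N (ee2 p q * mU)
  let u' := matAct N (mUs * ee1 p q)
  let w' := matAct N (mUs * ee2 p q)
  have hPQ : P + Q = 1 := by
    refine LinearMap.ext fun x => funext fun i => ?_
    exact LinearMap.congr_fun pP_add_pM (x i)
  have hJJ : J * J = 1 := by
    change matAct N _ * matAct N _ = 1
    rw [← map_mul, ee_sq, map_one]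
  have hL : u' * u - w' * w = J := by
    change matAct N _ * matAct N _ - matAct N _ * matAct N _ = matAct N _
    rw [← map_mul, ← map_mul, ← map_sub, ← hblk]
    congr 1
    calc mUs * ee1 p q * (ee1 p q * mU) - mUs * ee2 p q * (ee2 p q * mU)
        = mUs * (ee1 p q * ee1 p q - ee2 p q * ee2 p q) * mU := by
          simp only [mul_sub, sub_mul, mul_assoc]
      _ = _ := by rw [ee1_sq, ee2_sq]
  have hT1 : u * J * w' = 0 := by
    change matAct N _ * matAct N _ * matAct N _ = 0
    rw [← map_mul, ← map_mul]
    have : ee1 p q * mU * (ee1 p q - ee2 p q) * (mUs * ee2 p q) =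
        ee1 p q * (mU * (ee1 p q - ee2 p q) * mUs) * ee2 p q := by simp only [mul_assoc]
    rw [this, hblk', ee1_ee_ee2, map_zero]
  have hT2 : w * J * u' = 0 := by
    change matAct N _ * matAct N _ * matAct N _ = 0
    rw [← map_mul, ← map_mul]
    have : ee2 p q * mU * (ee1 p q - ee2 p q) * (mUs * ee1 p q) =
        ee2 p q * (mU * (ee1 p q - ee2 p q) * mUs) * ee1 p q := by simp only [mul_assoc]
    rw [this, hblk', ee2_ee_ee1, map_zero]
  have zPP : ∀ x, pP (pM x) = 0 := LinearMap.congr_fun pP_pM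
  have zMM : ∀ x, pM (pP x) = 0 := LinearMap.congr_fun pM_pP
  have hPu' : P * u' * Q = 0 := by
    refine end_ext fun v x => ?_
    simp only [P, u', Q, N, map_mul, Module.End.mul_apply, dg_elim, ee1_elim, hUs]
    rw [LinearMap.zero_apply, ← elim_zero]
    congr 1 <;> funext i <;>
      simp [Matrix.mulVec_zero, zPP, pP_cls_pM has, pP_cls_pM hbs]
  have hQw' : Q * w' * P = 0 := by
    refine end_ext fun v x => ?_
    simp only [P, w', Q, N, map_mul, Module.End.mul_apply, dg_elim, ee2_elim, hUs]
    rw [LinearMap.zero_apply, ← elim_zero]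
    congr 1 <;> funext i <;>
      simp [Matrix.mulVec_zero, zMM, pM_cls_pP hcs, pM_cls_pP hds]
  have hPw : P * w * Q = 0 := by
    refine end_ext fun v x => ?_
    simp only [P, w, Q, N, map_mul, Module.End.mul_apply, dg_elim, ee2_elim, hU]
    rw [LinearMap.zero_apply, ← elim_zero]
    congr 1 <;> funext i <;>
      simp [zPP, pP_cls_pM hc, pP_cls_pM hd]
  have hQu : Q * u * P = 0 := by
    refine end_ext fun v x => ?_
    simp only [P, u, Q, N, map_mul, Module.End.mul_apply, dg_elim, ee1_elim, hU]
    rw [LinearMap.zero_apply, ← elim_zero]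
    congr 1 <;> funext i <;>
      simp [zMM, pM_cls_pP ha, pM_cls_pP hb]
  have hPR : P * R * Q = 0 := LinearMap.ext fun x => funext fun i =>
    LinearMap.congr_fun (pP_trn_pM hτ) (x i)
  have hQS : Q * S * P = 0 := LinearMap.ext fun x => funext fun i =>
    LinearMap.congr_fun (pM_trn_pP hτ) (x i)
  have rel1 := core_apply hPQ hJJ (ee_dg pM) (ee_dg (trn τ)) (matAct_trn _ τ)
    (matAct_trn _ τ) (matAct_trn _ τ) hPu' hPw hPR hL hT1
  have rel2 := core_apply' hPQ hJJ (ee_dg pP) (ee_dg (trn (-τ))) (matAct_trn _ (-τ))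
    (matAct_trn _ (-τ)) (matAct_trn _ (-τ)) hQw' hQu hQS hL hT2
  -- Half-line vectors enter `L¹(ℝ)^(p+q)` through extension by zero: `ℝ₊` in the upper block,
  -- `ℝ₋` in the lower one.
  let e1 : L1P p → N → L1R := fun f => Sum.elim (exP f) 0
  let e2 : L1M q → N → L1R := fun f => Sum.elim 0 (exM f)
  have e1_inj : Function.Injective e1 := fun f g h => ex_injective meas_Ici μP_def
    (funext fun i => congrFun h (.inl i))
  have e2_inj : Function.Injective e2 := fun f g h => ex_injective meas_Iic μM_def
    (funext fun i => congrFun h (.inr i))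
  have op1 : ∀ f, P (u' (e1 f)) = Sum.elim (exP (Tpαs f)) (exP (Tpβs f)) := by
    intro f
    simp only [P, u', e1, N, map_mul, Module.End.mul_apply, ee1_elim, hUs, dg_elim]
    have h1 : exP (Tpαs f) = _ := ex_toep1 meas_Ici μP_def has.1 (hTpαs f)
    have h2 : exP (Tpβs f) = _ := ex_toep0 meas_Ici μP_def hbs.1 (hTpβs f)
    rw [h1, h2]
    congr 1 <;> funext i <;> simp [Matrix.mulVec_zero]
  have op2 : ∀ f, Q (w' (e2 f)) = Sum.elim (exM (Tmγs f)) (exM (Tmδs f)) := by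
    intro f
    simp only [Q, w', e2, N, map_mul, Module.End.mul_apply, ee2_elim, hUs, dg_elim]
    have h1 : exM (Tmδs f) = _ := ex_toep1 meas_Iic μM_def hds.1 (hTmδs f)
    have h2 : exM (Tmγs f) = _ := ex_toep0 meas_Iic μM_def hcs.1 (hTmγs f)
    rw [h1, h2]
    congr 1 <;> funext i <;> simp [Matrix.mulVec_zero]
  have op3 : ∀ f g, P (u (J (Sum.elim (exP f) (exP g)))) = e1 (Tpα f - Tpβ g) := by
    intro f g
    simp only [P, u, J, e1, N, map_mul, Module.End.mul_apply, ee1_elim, ee_elim, hU, dg_elim]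
    have h0 : exP (Tpα f - Tpβ g) = exP (Tpα f) - exP (Tpβ g) := ex_sub _ _ _ _
    have h1 : exP (Tpα f) = _ := ex_toep1 meas_Ici μP_def ha.1 (hTpα f)
    have h2 : exP (Tpβ g) = _ := ex_toep0 meas_Ici μP_def hb.1 (hTpβ g)
    rw [h0, h1, h2]
    congr 1 <;> funext i <;> simp [Matrix.mulVec_neg, sub_eq_add_neg]
  have op4 : ∀ f g, P (u (J (Sum.elim (exM f) (exM g)))) = e1 (Hpα f - Hpβ g) := by
    intro f g
    simp only [P, u, J, e1, N, map_mul, Module.End.mul_apply, ee1_elim, ee_elim, hU, dg_elim]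
    rw [exP, ex_sub, ex_hankel meas_Iic μM_def meas_Ici μP_def ha.1 (hHpα f),
      ex_hankel meas_Iic μM_def meas_Ici μP_def hb.1 (hHpβ g)]
    congr 1 <;> funext i <;> simp [Matrix.mulVec_neg, sub_eq_add_neg, pP_exM]
  have op5 : ∀ f g, Q (w (J (Sum.elim (exP f) (exP g)))) = e2 (Hmγ f - Hmδ g) := by
    intro f g
    simp only [Q, w, J, e2, N, map_mul, Module.End.mul_apply, ee2_elim, ee_elim, hU, dg_elim]
    rw [exM, ex_sub, ex_hankel meas_Ici μP_def meas_Iic μM_def hc.1 (hHmγ f),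
      ex_hankel meas_Ici μP_def meas_Iic μM_def hd.1 (hHmδ g)]
    congr 1 <;> funext i <;> simp [Matrix.mulVec_neg, sub_eq_add_neg, pM_exP]
  have op6 : ∀ f g, Q (w (J (Sum.elim (exM f) (exM g)))) = e2 (Tmγ f - Tmδ g) := by
    intro f g
    simp only [Q, w, J, e2, N, map_mul, Module.End.mul_apply, ee2_elim, ee_elim, hU, dg_elim]
    have h0 : exM (Tmγ f - Tmδ g) = exM (Tmγ f) - exM (Tmδ g) := ex_sub _ _ _ _
    have h1 : exM (Tmδ g) = _ := ex_toep1 meas_Iic μM_def hd.1 (hTmδ g)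
    have h2 : exM (Tmγ f) = _ := ex_toep0 meas_Iic μM_def hc.1 (hTmγ f)
    rw [h0, h1, h2]
    congr 1 <;> funext i
    · simp
    · simp [Matrix.mulVec_neg]
      abel
  have e1_sub : ∀ f g, e1 (f - g) = -e1 (g - f) := by
    intro f g
    have h1 : exP (f - g) = exP f - exP g := ex_sub _ _ _ _
    have h2 : exP (g - f) = exP g - exP f := ex_sub _ _ _ _
    funext i
    rcases i with i | i <;> simp [e1, h1, h2]
  have e2_sub : ∀ f g, e2 (f - g) = -e2 (g - f) := by
    intro f g
    have h1 : exM (f - g) = exM f - exM g := ex_sub _ _ _ _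
    have h2 : exM (g - f) = exM g - exM f := ex_sub _ _ _ _
    funext i
    rcases i with i | i <;> simp [e2, h1, h2]
  have sh1 : ∀ f, P (R (e1 f)) = e1 (Vps f) := by
    intro f
    simp only [P, R, e1, N, dg_elim]
    rw [ex_shiftStar hτ hVps]
    congr 1; funext i; simp
  have sh2 : ∀ f, P (S (e1 f)) = e1 (Vp f) := by
    intro f
    simp only [P, S, e1, N, dg_elim]
    rw [ex_shift hVp]
    congr 1; funext i; simp
  have sh3 : ∀ g, Q (R (e2 g)) = e2 (Jqp (Vq (Jqm g))) := by
    intro g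
    simp only [Q, R, e2, N, dg_elim]
    rw [ex_flip_shift hVq hJqp hJqm]
    congr 1; funext i; simp
  have sh4 : ∀ g, Q (S (e2 g)) = e2 (Jqp (Vqs (Jqm g))) := by
    intro g
    simp only [Q, S, e2, N, dg_elim]
    rw [ex_flip_shiftStar hτ hVqs hJqp hJqm]
    congr 1; funext i; simp
  -- With the opposite sign for `M12` and `M22`, the `Mᵢⱼ` are compressions of products of symbols.
  set M11 := Tpα.comp Tpαs - Tpβ.comp Tpβs with hM11
  set M12 := Hpβ.comp Tmδs - Hpα.comp Tmγs with hM12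
  set M21 := Hmγ.comp Tpαs - Hmδ.comp Tpβs with hM21
  set M22 := Tmδ.comp Tmδs - Tmγ.comp Tmγs with hM22
  have k11 : ∀ f, P (u (J (P (u' (e1 f))))) = e1 (M11 f) := fun f => by
    rw [op1, op3]; rfl
  have k12 : ∀ g, P (u (J (Q (w' (e2 g))))) = -e1 (M12 g) := fun g => by
    rw [op2, op4, e1_sub]; rfl
  have k21 : ∀ f, Q (w (J (P (u' (e1 f))))) = e2 (M21 f) := fun f => by
    rw [op1, op5]; rfl
  have k22 : ∀ g, Q (w (J (Q (w' (e2 g))))) = -e2 (M22 g) := fun g => by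
    rw [op2, op6, e2_sub]; rfl
  have R1 : M11.comp (Vps.comp M12) = M12.comp (Jqp.comp (Vq.comp (Jqm.comp M22))) := by
    refine ContinuousLinearMap.ext fun g => e1_inj (neg_injective ?_)
    have h := rel1 (e2 g)
    rw [k12, k22] at h
    simp only [map_neg] at h
    rw [sh1, sh3, k11, k12, neg_neg] at h
    exact h
  have R2 : M22.comp (Jqp.comp (Vqs.comp (Jqm.comp M21))) = M21.comp (Vp.comp M11) := by
    refine ContinuousLinearMap.ext fun f => e2_inj (neg_injective ?_)
    have h := rel2 (e1 f)
    rw [k21, k11, sh4, sh2, k22, k21] at h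
    exact h
  refine ⟨R1, R2, fun N₁₁ N₂₂ h1 h1' h2 h2' => ⟨?_, ?_⟩⟩
  · refine ContinuousLinearMap.ext fun g => ?_
    have e := congrArg N₁₁ (DFunLike.congr_fun R1 (N₂₂ g))
    have i1 := DFunLike.congr_fun h1 (Vps (M12 (N₂₂ g)))
    have i2 := DFunLike.congr_fun h2' g
    simp only [ContinuousLinearMap.comp_apply, ContinuousLinearMap.id_apply] at e i1 i2 ⊢
    rw [i1, i2] at e
    exact e
  · refine ContinuousLinearMap.ext fun f => ?_
    have e := congrArg N₂₂ (DFunLike.congr_fun R2 (N₁₁ f))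
    have i1 := DFunLike.congr_fun h2 (Jqp (Vqs (Jqm (M21 (N₁₁ f)))))
    have i2 := DFunLike.congr_fun h1' f
    simp only [ContinuousLinearMap.comp_apply, ContinuousLinearMap.id_apply] at e i1 i2 ⊢
    rw [i1, i2] at e
    exact e
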